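/- arXiv:1404.1941 — 3 statements merged into one kernel-verified Lean document; each statement's English description precedes it below -/
import Mathlib

section
/- Let ψ be the Morlet wavelet ψ(t)=e^{iu₀t−t²/2} with u₀∈ℝ, so that ψ̂(u)=√(2π) e^{−(u−u₀)²/2}, and set c_s = √(2π) e^{−u₀²/2} Σ_{p=0}^{⌊s/2⌋} (−1)^p u₀^{s−2p} / (p! (s−2p)! 2^p) for s≥0. Fix b∈ℝ, b≠0, let f∈L¹(ℝ)∩L²(ℝ), and set h(u)=e^{ibu} f̂(u). Assume h(u)=O(|u|^ρ) as u→0 for some ρ>−1, and that there exist β>0 and complex coefficients b_r^± such that for every N∈ℕ, h(u)−e^{ibu}Σ_{r=0}^{N−1} b_r^+ u^{−r−β}=O(u^{−N−β}) and h(−u)−e^{−ibu}Σ_{r=0}^{N−1} b_r^− u^{−r−β}=O(u^{−N−β}) as u→+∞. Then for every n≥1 the generalized Mellin transforms M[h₊;s+1] and M[h₋;s+1] exist for s=0,…,n−1 (where h₊(u)=h(u), h₋(u)=h(−u) for u>0), the limits defining δ_n(a) below exist, and for every a>0: (W_ψf)(b,a) = (1/2π)·{ Σ_{s=0}^{n−1}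 c_s ( M[h₊;s+1] + (−1)^s M[h₋;s+1] ) a^{s+1/2} + δ_n(a) }, where δ_n(a) = a^{−1/2} lim_{ε→0+} [ ∫_0^∞ ψ̂_n(u) h(u/a) e^{−εu} du + ∫_0^∞ ψ̂_n(−u) h(−u/a) e^{−εu} du ] and ψ̂_n(u) := ψ̂(u) − Σ_{s=0}^{n−1} c_s u^s. -/
open MeasureTheory Filter Set Topology Asymptotics

/-- The Fourier transform `f̂(ω) = ∫ e^{−itω} f(t) dt`. -/
noncomputable def fourierInt (f : ℝ → ℂ) (ω : ℝ) : ℂ :=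
  ∫ t : ℝ, Complex.exp (-(Complex.I * t * ω)) * f t

/-- The wavelet transform `(W_ψ f)(b, a) = a^{−1/2} ∫ f(t) conj(ψ((t−b)/a)) dt`. -/
noncomputable def waveletTransform (ψ f : ℝ → ℂ) (b a : ℝ) : ℂ :=
  (((Real.sqrt a)⁻¹ : ℝ) : ℂ) * ∫ t : ℝ, f t * (starRingEnd ℂ) (ψ ((t - b) / a))

/-- The Morlet wavelet `ψ(t) = e^{i u₀ t − t²/2}`. -/
noncomputable def morlet (u₀ : ℝ) : ℝ → ℂ :=
  fun t => Complex.exp (Complex.I * u₀ * t - (t : ℂ) ^ 2 / 2)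

/-- Its Fourier transform `ψ̂(u) = √(2π) e^{−(u−u₀)²/2}`. -/
noncomputable def morletHat (u₀ : ℝ) (u : ℝ) : ℂ :=
  ((Real.sqrt (2 * Real.pi) * Real.exp (-(u - u₀) ^ 2 / 2) : ℝ) : ℂ)

/-- The Maclaurin coefficients
`c_s = √(2π) e^{−u₀²/2} Σ_{p=0}^{⌊s/2⌋} (−1)^p u₀^{s−2p} / (p!(s−2p)! 2^p)`. -/
noncomputable def morletCoeff (u₀ : ℝ) (s : ℕ) : ℂ :=
  ((Real.sqrt (2 * Real.pi) * Real.exp (-u₀ ^ 2 / 2) *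
    ∑ p ∈ Finset.range (s / 2 + 1),
      (-1 : ℝ) ^ p * u₀ ^ (s - 2 * p) /
        ((p.factorial : ℝ) * ((s - 2 * p).factorial : ℝ) * 2 ^ p) : ℝ) : ℂ)

/-- The remainder `ψ̂_n(u) = ψ̂(u) − Σ_{s=0}^{n−1} c_s u^s`. -/
noncomputable def morletHatRem (u₀ : ℝ) (n : ℕ) (u : ℝ) : ℂ :=
  morletHat u₀ u - ∑ s ∈ Finset.range n, morletCoeff u₀ s * (u : ℂ) ^ s

/-!
By Parseval's formula `√a · W_ψ f(b, a) = (2π)⁻¹ ∫ conj ψ̂(u) h(u / a) du`. Subtract the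
polynomial `∑ c_s u^s` from `ψ̂` on each half-line: the scaling `u ↦ u / a` turns the Abel integral
of `u^s h(±u / a)` into `a^{s+1} M[h_±; s + 1]`. These Abel integrals exist because,
up to an absolutely integrable remainder, `h(±u)` is a combination of terms `u^γ e^{±ibu}` for large
`u`, and each integration by parts against `e^{±ibu}`, `b ≠ 0`, lowers the exponent `γ` by one until
the integral converges absolutely.
-/

section AbelIntegral

/-- The Abel-regularised integral `L = lim_{ε → 0+} ∫_S g(u) e^{-εu} du`, so that `M[h; z]` is the
Abel integral of `u^{z-1} h(u)` over `(0, ∞)`. Integrability of the damped function is part of the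
notion: without it the damped integrals could be the junk value `0`, and limits would not add. -/
structure HasAbelIntegral (g : ℝ → ℂ) (S : Set ℝ) (L : ℂ) : Prop where
  integrableOn : ∀ ε > 0, IntegrableOn (fun u => g u * ((Real.exp (-ε * u) : ℝ) : ℂ)) S
  tendsto : Tendsto (fun ε : ℝ => ∫ u in S, g u * ((Real.exp (-ε * u) : ℝ) : ℂ))
    (𝓝[>] 0) (𝓝 L)

namespace HasAbelIntegral

variable {g g₁ g₂ : ℝ → ℂ} {S T : Set ℝ} {L L₁ L₂ : ℂ}

lemma congr (hS : MeasurableSet S) (hg : EqOn g₁ g₂ S) (h : HasAbelIntegral g₁ S L) :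
    HasAbelIntegral g₂ S L := by
  have hdamp (ε : ℝ) : EqOn (fun u => g₁ u * ((Real.exp (-ε * u) : ℝ) : ℂ))
      (fun u => g₂ u * ((Real.exp (-ε * u) : ℝ) : ℂ)) S := fun u hu => by
    simp only [hg hu]
  exact ⟨fun ε hε => (h.integrableOn ε hε).congr_fun (hdamp ε) hS,
    h.tendsto.congr fun ε => setIntegral_congr_fun hS (hdamp ε)⟩

lemma zero : HasAbelIntegral (fun _ => 0) S 0 where
  integrableOn ε _ := by simp only [zero_mul, integrableOn_zero]
  tendsto := by simp only [zero_mul, integral_zero, tendsto_const_nhds]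

lemma add (h₁ : HasAbelIntegral g₁ S L₁) (h₂ : HasAbelIntegral g₂ S L₂) :
    HasAbelIntegral (fun u => g₁ u + g₂ u) S (L₁ + L₂) where
  integrableOn ε hε := by
    simpa only [add_mul] using! (h₁.integrableOn ε hε).add (h₂.integrableOn ε hε)
  tendsto := by
    refine (h₁.tendsto.add h₂.tendsto).congr' ?_
    filter_upwards [self_mem_nhdsWithin] with ε hε
    simp only [add_mul, integral_add (h₁.integrableOn ε hε) (h₂.integrableOn ε hε)]

lemma const_mul (c : ℂ) (h : HasAbelIntegral g S L) :
    HasAbelIntegral (fun u => c * g u) S (c * L) where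
  integrableOn ε hε := by
    simpa only [mul_assoc] using! (h.integrableOn ε hε).const_mul c
  tendsto := by
    simpa only [mul_assoc, integral_const_mul] using h.tendsto.const_mul c

lemma sub (h₁ : HasAbelIntegral g₁ S L₁) (h₂ : HasAbelIntegral g₂ S L₂) :
    HasAbelIntegral (fun u => g₁ u - g₂ u) S (L₁ - L₂) := by
  simpa only [neg_one_mul, ← sub_eq_add_neg] using h₁.add (h₂.const_mul (-1))

lemma finsetSum {ι : Type*} (t : Finset ι) {g : ι → ℝ → ℂ} {L : ι → ℂ}
    (h : ∀ i ∈ t, HasAbelIntegral (g i) S (L i)) :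
    HasAbelIntegral (fun u => ∑ i ∈ t, g i u) S (∑ i ∈ t, L i) := by
  induction t using Finset.cons_induction with
  | empty => simpa only [Finset.sum_empty] using zero
  | cons i t hi ih =>
    simp only [Finset.sum_cons]
    exact (h i (Finset.mem_cons_self i t)).add
      (ih fun j hj => h j (Finset.mem_cons_of_mem hj))

lemma union (hST : Disjoint S T) (hT : MeasurableSet T) (hgS : HasAbelIntegral g S L₁)
    (hgT : HasAbelIntegral g T L₂) : HasAbelIntegral g (S ∪ T) (L₁ + L₂) where
  integrableOn ε hε := (hgS.integrableOn ε hε).union (hgT.integrableOn ε hε)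
  tendsto := by
    refine (hgS.tendsto.add hgT.tendsto).congr' ?_
    filter_upwards [self_mem_nhdsWithin] with ε hε
    exact (setIntegral_union hST hT (hgS.integrableOn ε hε) (hgT.integrableOn ε hε)).symm

lemma of_integrableOn (hS : MeasurableSet S) (hS0 : S ⊆ Ici 0) (hg : IntegrableOn g S) :
    HasAbelIntegral g S (∫ u in S, g u) := by
  have hmeas (ε : ℝ) : AEStronglyMeasurable
      (fun u => g u * ((Real.exp (-ε * u) : ℝ) : ℂ)) (volume.restrict S) :=
    hg.aestronglyMeasurable.mul (by fun_prop)
  have hbound : ∀ ε > 0, ∀ᵐ u ∂volume.restrict S,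
      ‖g u * ((Real.exp (-ε * u) : ℝ) : ℂ)‖ ≤ ‖g u‖ := fun ε hε => by
    filter_upwards [ae_restrict_mem hS] with u hu
    have hu0 : 0 ≤ u := hS0 hu
    rw [norm_mul, Complex.norm_real, Real.norm_of_nonneg (Real.exp_nonneg _)]
    exact mul_le_of_le_one_right (norm_nonneg _) (Real.exp_le_one_iff.2 (by nlinarith))
  refine ⟨fun ε hε => hg.norm.mono' (hmeas ε) (hbound ε hε),
    tendsto_integral_filter_of_dominated_convergence (fun u => ‖g u‖)
      (Eventually.of_forall hmeas) (eventually_mem_nhdsWithin.mono hbound) hg.norm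
      (Eventually.of_forall fun u => ?_)⟩
  have hcont : Continuous fun ε : ℝ => g u * ((Real.exp (-ε * u) : ℝ) : ℂ) := by fun_prop
  simpa using (hcont.tendsto 0).mono_left nhdsWithin_le_nhds

lemma comp_div {a : ℝ} (ha : 0 < a) (h : HasAbelIntegral g (Ioi 0) L) :
    HasAbelIntegral (fun u => g (u / a)) (Ioi 0) (a * L) := by
  have hscale (ε u : ℝ) : g (a⁻¹ * u) * ((Real.exp (-(ε * a) * (a⁻¹ * u)) : ℝ) : ℂ) =
      g (u / a) * ((Real.exp (-ε * u) : ℝ) : ℂ) := by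
    rw [← div_eq_inv_mul, show -(ε * a) * (u / a) = -ε * u by field_simp]
  have hεa : Tendsto (fun ε : ℝ => ε * a) (𝓝[>] 0) (𝓝[>] 0) := by
    refine tendsto_nhdsWithin_iff.2 ⟨?_, eventually_mem_nhdsWithin.mono fun ε hε => mul_pos hε ha⟩
    exact ((continuous_mul_const a).tendsto' 0 0 (zero_mul a)).mono_left nhdsWithin_le_nhds
  constructor
  · intro ε hε
    have hint := h.integrableOn (ε * a) (mul_pos hε ha)
    rw [← mul_zero a⁻¹, ← integrableOn_Ioi_comp_mul_left_iff _ _ (inv_pos.2 ha)] at hint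
    simpa only [hscale] using hint
  · refine ((h.tendsto.comp hεa).const_mul (a : ℂ)).congr fun ε => ?_
    have hint := integral_comp_mul_left_Ioi
      (fun u => g u * ((Real.exp (-(ε * a) * u) : ℝ) : ℂ)) 0 (inv_pos.2 ha)
    simp only [hscale, mul_zero, inv_inv, Complex.real_smul] at hint
    exact hint.symm

end HasAbelIntegral

lemma hasAbelIntegral_sub_sum_pow_mul_comp_div {φ g : ℝ → ℂ} {a : ℝ} (ha : 0 < a)
    (hφg : IntegrableOn (fun u => φ u * g (u / a)) (Ioi 0)) (n : ℕ) (d : ℕ → ℂ) {M : ℕ → ℂ}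
    (hM : ∀ s < n, HasAbelIntegral (fun u => ((u ^ s : ℝ) : ℂ) * g u) (Ioi 0) (M s)) :
    HasAbelIntegral (fun u => (φ u - ∑ s ∈ Finset.range n, d s * (u : ℂ) ^ s) * g (u / a)) (Ioi 0)
      ((∫ u in Ioi 0, φ u * g (u / a)) -
        ∑ s ∈ Finset.range n, d s * a ^ s * (a * M s)) := by
  have hsum := HasAbelIntegral.finsetSum (Finset.range n) fun s hs =>
    ((hM s (Finset.mem_range.1 hs)).comp_div ha).const_mul (d s * a ^ s)
  refine ((HasAbelIntegral.of_integrableOn measurableSet_Ioi Ioi_subset_Ici_self hφg).sub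
    hsum).congr measurableSet_Ioi fun u _ => ?_
  have ha' : (a : ℂ) ≠ 0 := Complex.ofReal_ne_zero.2 ha.ne'
  rw [sub_mul, Finset.sum_mul]
  refine congrArg _ (Finset.sum_congr rfl fun s _ => ?_)
  push_cast
  rw [div_pow]
  field_simp

end AbelIntegral

section OscillatoryIntegral

lemma continuousOn_ofReal_rpow (γ : ℝ) : ContinuousOn (fun u : ℝ => ((u ^ γ : ℝ) : ℂ)) (Ioi 0) :=
  Complex.continuous_ofReal.comp_continuousOn
    (continuousOn_id.rpow_const fun _ hu => Or.inl (ne_of_gt hu))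

variable {c : ℝ}

lemma integrableOn_Ioi_rpow_mul_exp (hc : 0 < c) (γ : ℝ) {r : ℝ} (hr : r < 0) :
    IntegrableOn (fun u : ℝ => u ^ γ * Real.exp (r * u)) (Ioi c) := by
  refine integrable_of_isBigO_exp_neg (b := -r / 2) (by linarith) ?_ ?_
  · exact (continuousOn_id.rpow_const fun u hu => Or.inl (hc.trans_le hu).ne').mul (by fun_prop)
  · refine ((isLittleO_rpow_exp_pos_mul_atTop γ (b := -r / 2) (by linarith)).isBigO.mul
      (isBigO_refl (fun u : ℝ => Real.exp (r * u)) atTop)).congr_right fun u => ?_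
    rw [← Real.exp_add]
    ring_nf

lemma norm_ofReal_rpow_mul_cexp {u : ℝ} (hu : 0 ≤ u) (γ : ℝ) (z : ℂ) :
    ‖((u ^ γ : ℝ) : ℂ) * Complex.exp (z * u)‖ = u ^ γ * Real.exp (z.re * u) := by
  rw [norm_mul, Complex.norm_real, Real.norm_of_nonneg (Real.rpow_nonneg hu γ), Complex.norm_exp,
    Complex.re_mul_ofReal]

lemma integrableOn_Ioi_rpow_mul_cexp_iff (hc : 0 < c) (γ : ℝ) (z : ℂ) :
    IntegrableOn (fun u : ℝ => ((u ^ γ : ℝ) : ℂ) * Complex.exp (z * u)) (Ioi c) ↔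
      IntegrableOn (fun u : ℝ => u ^ γ * Real.exp (z.re * u)) (Ioi c) := by
  have hcont : ContinuousOn (fun u : ℝ => ((u ^ γ : ℝ) : ℂ) * Complex.exp (z * u)) (Ioi c) :=
    ((continuousOn_ofReal_rpow γ).mono (Ioi_subset_Ioi hc.le)).mul (by fun_prop)
  rw [IntegrableOn, ← integrable_norm_iff (hcont.aestronglyMeasurable measurableSet_Ioi)]
  exact integrableOn_congr_fun
    (fun u hu => norm_ofReal_rpow_mul_cexp (hc.trans hu).le γ z) measurableSet_Ioi

lemma integrableOn_Ioi_rpow_mul_cexp (hc : 0 < c) (γ : ℝ) {z : ℂ} (hz : z.re < 0) :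
    IntegrableOn (fun u : ℝ => ((u ^ γ : ℝ) : ℂ) * Complex.exp (z * u)) (Ioi c) :=
  (integrableOn_Ioi_rpow_mul_cexp_iff hc γ z).2 (integrableOn_Ioi_rpow_mul_exp hc γ hz)

lemma tendsto_rpow_mul_cexp_atTop (γ : ℝ) {z : ℂ} (hz : z.re < 0) :
    Tendsto (fun u : ℝ => ((u ^ γ : ℝ) : ℂ) * Complex.exp (z * u)) atTop (𝓝 0) := by
  rw [tendsto_zero_iff_norm_tendsto_zero]
  refine (tendsto_rpow_mul_exp_neg_mul_atTop_nhds_zero γ (-z.re) (by linarith)).congr' ?_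
  filter_upwards [eventually_ge_atTop 0] with u hu
  rw [norm_ofReal_rpow_mul_cexp hu, neg_neg]

lemma integral_Ioi_rpow_mul_cexp (hc : 0 < c) (γ : ℝ) {z : ℂ} (hz : z.re < 0) :
    ∫ u in Ioi c, ((u ^ γ : ℝ) : ℂ) * Complex.exp (z * u) =
      (-(((c ^ γ : ℝ) : ℂ) * Complex.exp (z * c)) -
        γ * ∫ u in Ioi c, ((u ^ (γ - 1) : ℝ) : ℂ) * Complex.exp (z * u)) / z := by
  have hz0 : z ≠ 0 := fun h => by simp [h] at hz
  have hpow : ∀ u ∈ Ioi c, HasDerivAt (fun u : ℝ => ((u ^ γ : ℝ) : ℂ))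
      ((γ * u ^ (γ - 1) : ℝ) : ℂ) u := fun u hu =>
    (Real.hasDerivAt_rpow_const (Or.inl (hc.trans hu).ne')).ofReal_comp
  have hexp : ∀ u ∈ Ioi c, HasDerivAt (fun u : ℝ => Complex.exp (z * u) / z)
      (Complex.exp (z * u)) u := fun u _ => by
    simpa [hz0] using ((((hasDerivAt_id u).ofReal_comp).const_mul z).cexp.div_const z)
  have hderiv (u : ℝ) : ((γ * u ^ (γ - 1) : ℝ) : ℂ) * (Complex.exp (z * u) / z) =
      γ / z * (((u ^ (γ - 1) : ℝ) : ℂ) * Complex.exp (z * u)) := by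
    push_cast
    ring
  have hint : IntegrableOn
      (fun u : ℝ => ((γ * u ^ (γ - 1) : ℝ) : ℂ) * (Complex.exp (z * u) / z)) (Ioi c) := by
    simpa only [hderiv] using! (integrableOn_Ioi_rpow_mul_cexp hc (γ - 1) hz).const_mul (γ / z)
  have hparts := integral_Ioi_mul_deriv_eq_deriv_mul hpow hexp
    (integrableOn_Ioi_rpow_mul_cexp hc γ hz) hint
    (a' := (c ^ γ : ℝ) * (Complex.exp (z * c) / z)) (b' := 0) ?_ ?_
  · simp only [hderiv, integral_const_mul] at hparts
    rw [hparts]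
    ring
  · have hcont : ContinuousAt (fun u : ℝ => ((u ^ γ : ℝ) : ℂ) * (Complex.exp (z * u) / z)) c :=
      ((continuousOn_ofReal_rpow γ).continuousAt (Ioi_mem_nhds hc)).mul (by fun_prop)
    exact hcont.tendsto.mono_left nhdsWithin_le_nhds
  · simpa [Pi.mul_def, mul_div_assoc] using (tendsto_rpow_mul_cexp_atTop γ hz).div_const z

lemma mul_cexp_mul_ofReal_exp (w : ℂ) (b ε u : ℝ) :
    w * Complex.exp (Complex.I * b * u) * ((Real.exp (-ε * u) : ℝ) : ℂ) =
      w * Complex.exp ((Complex.I * b - ε) * u) := by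
  rw [Complex.ofReal_exp, mul_assoc, ← Complex.exp_add]
  push_cast
  ring_nf

lemma HasAbelIntegral.rpow_mul_cexp_of_sub_one (hc : 0 < c) {b : ℝ} (hb : b ≠ 0) {γ : ℝ} {L : ℂ}
    (hL : HasAbelIntegral
      (fun u => ((u ^ (γ - 1) : ℝ) : ℂ) * Complex.exp (Complex.I * b * u)) (Ioi c) L) :
    HasAbelIntegral (fun u => ((u ^ γ : ℝ) : ℂ) * Complex.exp (Complex.I * b * u)) (Ioi c)
      ((-(((c ^ γ : ℝ) : ℂ) * Complex.exp (Complex.I * b * c)) - γ * L) / (Complex.I * b)) := by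
  have hre {ε : ℝ} (hε : 0 < ε) : (Complex.I * b - ε).re < 0 := by simpa using hε
  have htendsto := hL.tendsto
  constructor
  · intro ε hε
    simpa only [mul_cexp_mul_ofReal_exp] using integrableOn_Ioi_rpow_mul_cexp hc γ (hre hε)
  · simp only [mul_cexp_mul_ofReal_exp] at htendsto ⊢
    have hz : Tendsto (fun ε : ℝ => Complex.I * b - ε) (𝓝[>] 0) (𝓝 (Complex.I * b)) :=
      (Continuous.tendsto' (by fun_prop) 0 _ (by simp)).mono_left nhdsWithin_le_nhds
    have hcexp := (Complex.continuous_exp.tendsto _).comp (hz.mul_const (c : ℂ))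
    refine (((hcexp.const_mul ((c ^ γ : ℝ) : ℂ)).neg.sub (htendsto.const_mul (γ : ℂ))).div hz
      (by simpa using hb)).congr' ?_
    filter_upwards [self_mem_nhdsWithin] with ε hε
    exact (integral_Ioi_rpow_mul_cexp hc γ (hre hε)).symm

lemma exists_hasAbelIntegral_rpow_mul_cexp (hc : 0 < c) {b : ℝ} (hb : b ≠ 0) (γ : ℝ) :
    ∃ L, HasAbelIntegral
      (fun u => ((u ^ γ : ℝ) : ℂ) * Complex.exp (Complex.I * b * u)) (Ioi c) L := by
  obtain ⟨k, hk⟩ := exists_nat_gt (γ + 1)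
  induction k generalizing γ with
  | zero =>
    refine ⟨_, .of_integrableOn measurableSet_Ioi (Ioi_subset_Ici_self.trans
      (Ici_subset_Ici.2 hc.le)) ((integrableOn_Ioi_rpow_mul_cexp_iff hc γ _).2 ?_)⟩
    simpa using integrableOn_Ioi_rpow_of_lt (by push_cast at hk; linarith) hc
  | succ k ih =>
    obtain ⟨L, hL⟩ := ih (γ - 1) (by push_cast at hk; linarith)
    exact ⟨_, hL.rpow_mul_cexp_of_sub_one hc hb⟩

/-- The asymptotic expansion `g(u) ~ e^{ibu} ∑ r, coeff r * u^{-r-β}` to all orders as `u → +∞`. -/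
def HasOscillatoryExpansion (g : ℝ → ℂ) (b β : ℝ) (coeff : ℕ → ℂ) : Prop :=
  ∀ N : ℕ, (fun u : ℝ => g u - Complex.exp (Complex.I * b * u) *
      ∑ r ∈ Finset.range N, coeff r * ((u ^ (-(r : ℝ) - β) : ℝ) : ℂ))
    =O[atTop] fun u => u ^ (-(N : ℝ) - β)

namespace HasOscillatoryExpansion

variable {g : ℝ → ℂ} {b β : ℝ} {coeff : ℕ → ℂ}

lemma integrableOn_rpow_mul_remainder (hexp : HasOscillatoryExpansion g b β coeff) (hc : 0 < c)
    (hg : LocallyIntegrableOn g (Ici c)) {γ : ℝ} {N : ℕ} (hN : γ - β + 1 < N) :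
    IntegrableOn (fun u => ((u ^ γ : ℝ) : ℂ) * (g u - Complex.exp (Complex.I * b * u) *
      ∑ r ∈ Finset.range N, coeff r * ((u ^ (-(r : ℝ) - β) : ℝ) : ℂ))) (Ioi c) := by
  have hrpow (δ : ℝ) : ContinuousOn (fun u : ℝ => ((u ^ δ : ℝ) : ℂ)) (Ici c) :=
    (continuousOn_ofReal_rpow δ).mono (Ici_subset_Ioi.2 hc)
  have hmain : ContinuousOn (fun u : ℝ => Complex.exp (Complex.I * b * u) *
      ∑ r ∈ Finset.range N, coeff r * ((u ^ (-(r : ℝ) - β) : ℝ) : ℂ)) (Ici c) :=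
    ContinuousOn.mul (by fun_prop)
      (continuousOn_finsetSum _ fun r _ => continuousOn_const.mul (hrpow _))
  have hloc := (hg.sub (hmain.locallyIntegrableOn measurableSet_Ici)).continuousOn_mul
    (hrpow γ) isClosed_Ici.isLocallyClosed
  have hO : (fun u => ((u ^ γ : ℝ) : ℂ) * (g u - Complex.exp (Complex.I * b * u) *
      ∑ r ∈ Finset.range N, coeff r * ((u ^ (-(r : ℝ) - β) : ℝ) : ℂ)))
        =O[atTop] fun u => u ^ (γ - N - β) := by
    have hγ : (fun u : ℝ => ((u ^ γ : ℝ) : ℂ)) =O[atTop] fun u : ℝ => u ^ γ :=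
      .of_norm_left (by simpa using (isBigO_refl (fun u : ℝ => u ^ γ) atTop).norm_left)
    refine (hγ.mul (hexp N)).trans_eventuallyEq ?_
    filter_upwards [eventually_gt_atTop 0] with u hu
    rw [← Real.rpow_add hu]
    ring_nf
  exact (hloc.integrableOn_of_isBigO_atTop hO ⟨Ioi 1, Ioi_mem_atTop 1,
    integrableOn_Ioi_rpow_of_lt (by linarith) one_pos⟩).mono_set Ioi_subset_Ici_self

lemma exists_hasAbelIntegral_Ioi (hexp : HasOscillatoryExpansion g b β coeff) (hb : b ≠ 0)
    (hc : 0 < c) (hg : LocallyIntegrableOn g (Ici c)) (γ : ℝ) :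
    ∃ L, HasAbelIntegral (fun u => ((u ^ γ : ℝ) : ℂ) * g u) (Ioi c) L := by
  obtain ⟨N, hN⟩ := exists_nat_gt (γ - β + 1)
  have hrem := HasAbelIntegral.of_integrableOn measurableSet_Ioi
    (Ioi_subset_Ici_self.trans (Ici_subset_Ici.2 hc.le))
    (hexp.integrableOn_rpow_mul_remainder hc hg hN)
  choose L hL using fun r : ℕ => exists_hasAbelIntegral_rpow_mul_cexp hc hb (γ + (-r - β))
  have hmain := HasAbelIntegral.finsetSum (Finset.range N) fun r _ => (hL r).const_mul (coeff r)
  refine ⟨_, (hrem.add hmain).congr measurableSet_Ioi fun u hu => ?_⟩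
  simp only [Real.rpow_add (hc.trans hu), Complex.ofReal_mul, mul_sub, Finset.mul_sum]
  rw [sub_add, sub_eq_self, sub_eq_zero]
  exact Finset.sum_congr rfl fun r _ => by ring

lemma exists_hasAbelIntegral_pow_mul (hexp : HasOscillatoryExpansion g b β coeff) (hb : b ≠ 0)
    (hg : LocallyIntegrableOn g (Ici 0)) (s : ℕ) :
    ∃ M, HasAbelIntegral (fun u => ((u ^ s : ℝ) : ℂ) * g u) (Ioi 0) M := by
  have hnear : IntegrableOn (fun u => ((u ^ s : ℝ) : ℂ) * g u) (Ioc 0 1) :=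
    ((hg.integrableOn_compact_subset Icc_subset_Ici_self isCompact_Icc).continuousOn_mul
      (by fun_prop) isCompact_Icc).mono_set Ioc_subset_Icc_self
  obtain ⟨L, hfar⟩ := hexp.exists_hasAbelIntegral_Ioi hb one_pos
    (hg.mono_set (Ici_subset_Ici.2 zero_le_one)) s
  simp only [Real.rpow_natCast] at hfar
  rw [← Ioc_union_Ioi_eq_Ioi (zero_le_one (α := ℝ))]
  exact ⟨_, (HasAbelIntegral.of_integrableOn measurableSet_Ioc
    (fun _ hu => hu.1.le) hnear).union (Ioc_disjoint_Ioi le_rfl) measurableSet_Ioi hfar⟩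

end HasOscillatoryExpansion

end OscillatoryIntegral

section Fourier

lemma fourierInt_eq_vectorFourier (f : ℝ → ℂ) :
    fourierInt f = VectorFourier.fourierIntegral Real.probChar volume (LinearMap.mul ℝ ℝ) f := by
  ext ω
  rw [VectorFourier.fourierIntegral_probChar, fourierInt]
  congr with t
  rw [LinearMap.mul_apply', smul_eq_mul]
  push_cast
  ring_nf

lemma continuous_fourierInt {f : ℝ → ℂ} (hf : Integrable f) : Continuous (fourierInt f) := by
  rw [fourierInt_eq_vectorFourier]
  exact VectorFourier.fourierIntegral_continuous Real.continuous_probChar continuous_mul hf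

lemma norm_fourierInt_le (f : ℝ → ℂ) (ω : ℝ) : ‖fourierInt f ω‖ ≤ ∫ t, ‖f t‖ := by
  rw [fourierInt_eq_vectorFourier]
  exact VectorFourier.norm_fourierIntegral_le_integral_norm ..

lemma integral_fourierInt_mul {f g : ℝ → ℂ} (hf : Integrable f) (hg : Integrable g) :
    ∫ u, fourierInt f u * g u = ∫ t, f t * fourierInt g t := by
  have hflip : (LinearMap.mul ℝ ℝ).flip = LinearMap.mul ℝ ℝ := by
    ext
    simp only [LinearMap.flip_apply]
  have hswap := VectorFourier.integral_fourierIntegral_smul_eq_flip (L := LinearMap.mul ℝ ℝ)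
    Real.continuous_probChar continuous_mul hf hg
  rwa [hflip, ← fourierInt_eq_vectorFourier, ← fourierInt_eq_vectorFourier] at hswap

lemma integral_comp_mul_add (g : ℝ → ℂ) (a b : ℝ) :
    ∫ x, g (a * x + b) = |a⁻¹| * ∫ t, g t := by
  rw [Measure.integral_comp_mul_left (fun t => g (t + b)), integral_add_right_eq_self g b,
    Complex.real_smul]

lemma fourierInt_comp_mul_add (f : ℝ → ℂ) {a : ℝ} (ha : a ≠ 0) (b u : ℝ) :
    fourierInt (fun x => f (a * x + b)) u =
      |a⁻¹| * (Complex.exp (Complex.I * b * (u / a : ℝ)) * fourierInt f (u / a)) := by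
  rw [fourierInt, fourierInt, ← integral_const_mul, ← integral_comp_mul_add _ a b]
  congr with x
  rw [← mul_assoc, ← Complex.exp_add]
  congr 2
  have haC : (a : ℂ) ≠ 0 := Complex.ofReal_ne_zero.2 ha
  push_cast
  field_simp
  ring

lemma integral_mul_fourierInt_comp_sub_div {f φ : ℝ → ℂ} (hf : Integrable f) (hφ : Integrable φ)
    {a : ℝ} (ha : a ≠ 0) (b : ℝ) :
    ∫ t, f t * fourierInt φ ((t - b) / a) =
      ∫ u, φ u * (Complex.exp (Complex.I * b * (u / a : ℝ)) * fourierInt f (u / a)) := by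
  have hfab : Integrable fun x => f (a * x + b) := (hf.comp_add_right b).comp_mul_left' ha
  have habs : ((|a⁻¹| : ℝ) : ℂ) ≠ 0 := by simpa using ha
  refine mul_left_cancel₀ habs ?_
  calc |a⁻¹| * ∫ t, f t * fourierInt φ ((t - b) / a)
      = ∫ x, f (a * x + b) * fourierInt φ x := by
        rw [← integral_comp_mul_add _ a b]
        simp only [add_sub_cancel_right, mul_div_cancel_left₀ _ ha]
    _ = ∫ u, fourierInt (fun x => f (a * x + b)) u * φ u :=
        (integral_fourierInt_mul hfab hφ).symm
    _ = |a⁻¹| * ∫ u, φ u * (Complex.exp (Complex.I * b * (u / a : ℝ)) * fourierInt f (u / a)) := by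
        simp only [fourierInt_comp_mul_add f ha, mul_assoc, integral_const_mul]
        simp only [← mul_assoc, mul_comm (φ _)]

lemma waveletTransform_eq_integral_fourierInt {ψ φ f : ℝ → ℂ} (hφ : Integrable φ)
    (hψ : ∀ x, fourierInt φ x = 2 * Real.pi * (starRingEnd ℂ) (ψ x)) (hf : Integrable f)
    {a : ℝ} (ha : a ≠ 0) (b : ℝ) :
    waveletTransform ψ f b a = ((2 * Real.pi)⁻¹ : ℝ) * (((√a)⁻¹ : ℝ) *
      ∫ u, φ u * (Complex.exp (Complex.I * b * (u / a : ℝ)) * fourierInt f (u / a))) := by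
  have hpi : (Real.pi : ℂ) ≠ 0 := Complex.ofReal_ne_zero.2 Real.pi_ne_zero
  rw [← integral_mul_fourierInt_comp_sub_div hf hφ ha, waveletTransform]
  simp only [hψ, mul_left_comm (f _), integral_const_mul]
  push_cast
  field_simp

lemma integral_eq_integral_Ioi_add_integral_Ioi_comp_neg {F : ℝ → ℂ} (hF : Integrable F) :
    ∫ u, F u = (∫ u in Ioi 0, F u) + ∫ u in Ioi 0, F (-u) := by
  rw [integral_comp_neg_Ioi, neg_zero, add_comm,
    intervalIntegral.integral_Iic_add_Ioi hF.integrableOn hF.integrableOn]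

end Fourier

section GeneralWavelet

lemma ofReal_rpow_natCast_add_half {a : ℝ} (ha : 0 < a) (s : ℕ) :
    ((a ^ ((s : ℝ) + 1 / 2) : ℝ) : ℂ) = (((√a)⁻¹ : ℝ) : ℂ) * ((a : ℂ) ^ s * a) := by
  have hsqrt : (√a)⁻¹ * a = √a := by
    rw [inv_mul_eq_div, Real.div_sqrt]
  rw [Real.rpow_add ha, Real.rpow_natCast, ← Real.sqrt_eq_rpow, mul_left_comm]
  norm_cast
  rw [hsqrt]

lemma integrable_mul_cexp_mul_fourierInt_comp_div {φ f : ℝ → ℂ} (hφ : Integrable φ)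
    (hf : Integrable f) (a b : ℝ) :
    Integrable fun u =>
      φ u * (Complex.exp (Complex.I * b * (u / a : ℝ)) * fourierInt f (u / a)) := by
  have hcont := continuous_fourierInt hf
  refine hφ.mul_bdd (c := ∫ t, ‖f t‖) (Continuous.aestronglyMeasurable (by fun_prop))
    (Eventually.of_forall fun u => ?_)
  have hunit : ‖Complex.exp (Complex.I * b * (u / a : ℝ))‖ = 1 := by
    rw [mul_assoc, ← Complex.ofReal_mul, Complex.norm_exp_I_mul_ofReal]
  rw [norm_mul, hunit, one_mul]
  exact norm_fourierInt_le f _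

lemma hasAbelIntegral_sub_sum_pow_mul_comp_neg_div {φ g : ℝ → ℂ} {a : ℝ} (ha : 0 < a)
    (hφg : IntegrableOn (fun u => φ (-u) * g (-u / a)) (Ioi 0)) (n : ℕ) (d : ℕ → ℂ) {M : ℕ → ℂ}
    (hM : ∀ s < n, HasAbelIntegral (fun u => ((u ^ s : ℝ) : ℂ) * g (-u)) (Ioi 0) (M s)) :
    HasAbelIntegral
      (fun u => (φ (-u) - ∑ s ∈ Finset.range n, d s * ((-u : ℝ) : ℂ) ^ s) * g (-u / a)) (Ioi 0)
      ((∫ u in Ioi 0, φ (-u) * g (-u / a)) -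
        ∑ s ∈ Finset.range n, d s * (-1) ^ s * a ^ s * (a * M s)) := by
  simp only [neg_div] at hφg ⊢
  refine (hasAbelIntegral_sub_sum_pow_mul_comp_div (φ := fun u => φ (-u)) ha hφg n
    (fun s => d s * (-1) ^ s) hM).congr measurableSet_Ioi fun u _ => ?_
  simp only [Complex.ofReal_neg, neg_pow (u : ℂ), mul_assoc]

/-- `φ` plays the role of `conj ψ̂`, and `hψ` is the Fourier inversion formula for it. -/
theorem morlet_wavelet_asymptotic_general {ψ φ f h : ℝ → ℂ} (hφ : Integrable φ)
    (hψ : ∀ x, fourierInt φ x = 2 * Real.pi * (starRingEnd ℂ) (ψ x)) (hf : Integrable f)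
    {b β : ℝ} (hb : b ≠ 0) (hdef : ∀ u : ℝ, h u = Complex.exp (Complex.I * b * u) * fourierInt f u)
    {bp bm : ℕ → ℂ} (hhp : HasOscillatoryExpansion h b β bp)
    (hhm : HasOscillatoryExpansion (fun u => h (-u)) (-b) β bm) (d : ℕ → ℂ) :
    ∃ Mp Mm : ℕ → ℂ,
      (∀ s, HasAbelIntegral (fun u => ((u ^ s : ℝ) : ℂ) * h u) (Ioi 0) (Mp s) ∧
        HasAbelIntegral (fun u => ((u ^ s : ℝ) : ℂ) * h (-u)) (Ioi 0) (Mm s)) ∧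
      ∀ (n : ℕ) (a : ℝ), 0 < a → ∃ Lp Lm : ℂ,
        HasAbelIntegral (fun u =>
          (φ u - ∑ s ∈ Finset.range n, d s * (u : ℂ) ^ s) * h (u / a)) (Ioi 0) Lp ∧
        HasAbelIntegral (fun u =>
          (φ (-u) - ∑ s ∈ Finset.range n, d s * ((-u : ℝ) : ℂ) ^ s) * h (-u / a)) (Ioi 0) Lm ∧
        waveletTransform ψ f b a = (((2 * Real.pi)⁻¹ : ℝ) : ℂ) *
          ((∑ s ∈ Finset.range n, d s * (Mp s + (-1 : ℂ) ^ s * Mm s) *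
              ((a ^ ((s : ℝ) + 1 / 2) : ℝ) : ℂ)) +
            (((√a)⁻¹ : ℝ) : ℂ) * (Lp + Lm)) := by
  have hcont : Continuous h := by
    rw [funext hdef]
    exact Continuous.mul (by fun_prop) (continuous_fourierInt hf)
  choose Mp hMp using hhp.exists_hasAbelIntegral_pow_mul hb
    (hcont.locallyIntegrable.locallyIntegrableOn _)
  choose Mm hMm using hhm.exists_hasAbelIntegral_pow_mul (neg_ne_zero.2 hb)
    ((hcont.comp continuous_neg).locallyIntegrable.locallyIntegrableOn _)
  refine ⟨Mp, Mm, fun s => ⟨hMp s, hMm s⟩, fun n a ha => ?_⟩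
  have hφh : Integrable fun u => φ u * h (u / a) := by
    simpa only [hdef] using integrable_mul_cexp_mul_fourierInt_comp_div hφ hf a b
  have hW := waveletTransform_eq_integral_fourierInt hφ hψ hf ha.ne' b
  simp only [← hdef] at hW
  refine ⟨_, _,
    hasAbelIntegral_sub_sum_pow_mul_comp_div ha hφh.integrableOn n d fun s _ => hMp s,
    hasAbelIntegral_sub_sum_pow_mul_comp_neg_div ha hφh.comp_neg.integrableOn n d fun s _ => hMm s,
    ?_⟩
  rw [hW, integral_eq_integral_Ioi_add_integral_Ioi_comp_neg hφh]
  have hsum : ∑ s ∈ Finset.range n, d s * (Mp s + (-1 : ℂ) ^ s * Mm s) *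
      ((a ^ ((s : ℝ) + 1 / 2) : ℝ) : ℂ) = (((√a)⁻¹ : ℝ) : ℂ) *
        ((∑ s ∈ Finset.range n, d s * a ^ s * (a * Mp s)) +
          ∑ s ∈ Finset.range n, d s * (-1) ^ s * a ^ s * (a * Mm s)) := by
    rw [← Finset.sum_add_distrib, Finset.mul_sum]
    refine Finset.sum_congr rfl fun s _ => ?_
    rw [ofReal_rpow_natCast_add_half ha]
    ring
  rw [hsum]
  ring

end GeneralWavelet

section Morlet

lemma integral_cexp_neg_sq_div_two_add_mul (c : ℂ) :
    ∫ x : ℝ, Complex.exp (-(x : ℂ) ^ 2 / 2 + c * x) =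
      ((√(2 * Real.pi) : ℝ) : ℂ) * Complex.exp (c ^ 2 / 2) := by
  have hgauss := integral_cexp_quadratic (b := -(1 / 2)) (by norm_num) c 0
  have hsqrt : ((Real.pi : ℂ) / -(-(1 / 2))) ^ (1 / 2 : ℂ) = ((√(2 * Real.pi) : ℝ) : ℂ) := by
    rw [Real.sqrt_eq_rpow, Complex.ofReal_cpow (by positivity)]
    push_cast
    ring_nf
  rw [hsqrt] at hgauss
  convert hgauss using 3
  all_goals ring_nf

lemma morletHat_eq_cexp (u₀ u : ℝ) :
    morletHat u₀ u = ((√(2 * Real.pi) : ℝ) : ℂ) * Complex.exp (-((u : ℂ) - u₀) ^ 2 / 2) := by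
  rw [morletHat]
  push_cast
  rfl

lemma fourierInt_morlet (u₀ u : ℝ) : fourierInt (morlet u₀) u = morletHat u₀ u := by
  rw [morletHat_eq_cexp, fourierInt]
  calc ∫ t : ℝ, Complex.exp (-(Complex.I * t * u)) * morlet u₀ t
      = ∫ t : ℝ, Complex.exp (-(t : ℂ) ^ 2 / 2 + Complex.I * (u₀ - u) * t) := by
        congr with t
        rw [morlet, ← Complex.exp_add]
        ring_nf
    _ = ((√(2 * Real.pi) : ℝ) : ℂ) * Complex.exp ((Complex.I * (u₀ - u)) ^ 2 / 2) :=
        integral_cexp_neg_sq_div_two_add_mul _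
    _ = ((√(2 * Real.pi) : ℝ) : ℂ) * Complex.exp (-((u : ℂ) - u₀) ^ 2 / 2) := by
        rw [mul_pow, Complex.I_sq]
        ring_nf

lemma conj_morlet (u₀ x : ℝ) :
    (starRingEnd ℂ) (morlet u₀ x) = Complex.exp (-(Complex.I * u₀ * x) - (x : ℂ) ^ 2 / 2) := by
  rw [morlet, ← Complex.exp_conj]
  simp [map_ofNat]

lemma fourierInt_morletHat (u₀ x : ℝ) :
    fourierInt (morletHat u₀) x = 2 * Real.pi * (starRingEnd ℂ) (morlet u₀ x) := by
  have hsq : ((√(2 * Real.pi) : ℝ) : ℂ) * ((√(2 * Real.pi) : ℝ) : ℂ) = 2 * Real.pi := by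
    rw [← Complex.ofReal_mul, Real.mul_self_sqrt (by positivity)]
    push_cast
    rfl
  rw [conj_morlet, fourierInt, ← hsq, mul_assoc]
  calc ∫ u : ℝ, Complex.exp (-(Complex.I * u * x)) * morletHat u₀ u
      = ∫ u : ℝ, ((√(2 * Real.pi) : ℝ) : ℂ) * (Complex.exp (-(u₀ : ℂ) ^ 2 / 2) *
          Complex.exp (-(u : ℂ) ^ 2 / 2 + (u₀ - Complex.I * x) * u)) := by
        congr with u
        rw [morletHat_eq_cexp, mul_left_comm, ← Complex.exp_add, ← Complex.exp_add]
        ring_nf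
    _ = ((√(2 * Real.pi) : ℝ) : ℂ) * (((√(2 * Real.pi) : ℝ) : ℂ) *
          (Complex.exp (-(u₀ : ℂ) ^ 2 / 2) * Complex.exp ((u₀ - Complex.I * x) ^ 2 / 2))) := by
        rw [integral_const_mul, integral_const_mul, integral_cexp_neg_sq_div_two_add_mul,
          mul_left_comm (Complex.exp _)]
    _ = ((√(2 * Real.pi) : ℝ) : ℂ) * (((√(2 * Real.pi) : ℝ) : ℂ) *
          Complex.exp (-(Complex.I * u₀ * x) - (x : ℂ) ^ 2 / 2)) := by
        rw [← Complex.exp_add]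
        congr 3
        linear_combination (x : ℂ) ^ 2 / 2 * Complex.I_sq

lemma integrable_morletHat (u₀ : ℝ) : Integrable (morletHat u₀) := by
  have hgauss := (integrable_cexp_quadratic (b := 1 / 2) (by norm_num) (u₀ : ℂ)
    (-(u₀ : ℂ) ^ 2 / 2)).const_mul ((√(2 * Real.pi) : ℝ) : ℂ)
  refine hgauss.congr (Eventually.of_forall fun u => ?_)
  simp only [morletHat_eq_cexp]
  ring_nf

end Morlet

/-- **Asymptotic expansion of the Morlet wavelet transform for small `a`.**
With `ψ` the Morlet wavelet (so `ψ̂(u) = √(2π) e^{−(u−u₀)²/2}`), `b ≠ 0`,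
`f ∈ L¹ ∩ L²`, `h(u) = e^{ibu} f̂(u)` with `h(u) = O(|u|^ρ)` (`ρ > −1`) as `u → 0`
and the stated expansions as `u → ±∞`, then for every `n ≥ 1` the generalized Mellin
transforms `M[h₊; s+1]`, `M[h₋; s+1]` exist for `s < n`, the limit defining `δ_n(a)`
exists, and `(W_ψ f)(b,a) = (1/2π){Σ_{s<n} c_s (M[h₊;s+1] + (−1)^s M[h₋;s+1]) a^{s+1/2}
+ δ_n(a)}` where `δ_n(a) = a^{−1/2}·(limit)`. -/
theorem morlet_wavelet_asymptotic (u₀ b : ℝ) (hb : b ≠ 0)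
    (f : ℝ → ℂ) (hf1 : Integrable f) (hf2 : MemLp f 2 volume)
    (h : ℝ → ℂ) (hdef : ∀ u : ℝ, h u = Complex.exp (Complex.I * b * u) * fourierInt f u)
    (ρ : ℝ) (hρ : -1 < ρ)
    (hh0 : h =O[𝓝[≠] (0 : ℝ)] fun u => |u| ^ ρ)
    (β : ℝ) (hβ : 0 < β) (bp bm : ℕ → ℂ)
    (hhp : ∀ N : ℕ,
      (fun u : ℝ => h u - Complex.exp (Complex.I * b * u) *
          ∑ r ∈ Finset.range N, bp r * ((u ^ (-(r : ℝ) - β) : ℝ) : ℂ))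
        =O[atTop] fun u => u ^ (-(N : ℝ) - β))
    (hhm : ∀ N : ℕ,
      (fun u : ℝ => h (-u) - Complex.exp (-(Complex.I * b * u)) *
          ∑ r ∈ Finset.range N, bm r * ((u ^ (-(r : ℝ) - β) : ℝ) : ℂ))
        =O[atTop] fun u => u ^ (-(N : ℝ) - β)) :
    (∀ u : ℝ, fourierInt (morlet u₀) u = morletHat u₀ u)
    ∧ ∀ n : ℕ, 1 ≤ n →
      ∃ Mp Mm : ℕ → ℂ,
        (∀ s : ℕ, s < n →
          Tendsto (fun ε : ℝ => ∫ u in Ioi (0 : ℝ),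
              ((u ^ s : ℝ) : ℂ) * h u * ((Real.exp (-ε * u) : ℝ) : ℂ))
            (𝓝[>] 0) (𝓝 (Mp s))
          ∧ Tendsto (fun ε : ℝ => ∫ u in Ioi (0 : ℝ),
              ((u ^ s : ℝ) : ℂ) * h (-u) * ((Real.exp (-ε * u) : ℝ) : ℂ))
            (𝓝[>] 0) (𝓝 (Mm s)))
        ∧ ∀ a : ℝ, 0 < a → ∃ L : ℂ,
            Tendsto (fun ε : ℝ =>
                (∫ u in Ioi (0 : ℝ),
                  morletHatRem u₀ n u * h (u / a) * ((Real.exp (-ε * u) : ℝ) : ℂ))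
                + ∫ u in Ioi (0 : ℝ),
                  morletHatRem u₀ n (-u) * h (-u / a) * ((Real.exp (-ε * u) : ℝ) : ℂ))
              (𝓝[>] 0) (𝓝 L)
            ∧ waveletTransform (morlet u₀) f b a
              = (((2 * Real.pi)⁻¹ : ℝ) : ℂ) *
                ((∑ s ∈ Finset.range n, morletCoeff u₀ s * (Mp s + (-1 : ℂ) ^ s * Mm s) *
                    ((a ^ ((s : ℝ) + 1 / 2) : ℝ) : ℂ))
                  + (((Real.sqrt a)⁻¹ : ℝ) : ℂ) * L) := by
  have hhm' : HasOscillatoryExpansion (fun u => h (-u)) (-b) β bm := by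
    simpa [HasOscillatoryExpansion] using hhm
  obtain ⟨Mp, Mm, hM, hδ⟩ := morlet_wavelet_asymptotic_general (integrable_morletHat u₀)
    (fourierInt_morletHat u₀) hf1 hb hdef hhp hhm' (morletCoeff u₀)
  refine ⟨fourierInt_morlet u₀, fun n _ => ⟨Mp, Mm,
    fun s _ => ⟨(hM s).1.tendsto, (hM s).2.tendsto⟩, fun a ha => ?_⟩⟩
  obtain ⟨Lp, Lm, hLp, hLm, hW⟩ := hδ n a ha
  exact ⟨Lp + Lm, hLp.tendsto.add hLm.tendsto, hW⟩
end

section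
/- Let f, ψ ∈ L¹(ℝ)∩L²(ℝ), let b∈ℝ and a>0. Then the function ω ↦ e^{ibω} f̂(ω) conj(ψ̂(aω)) is integrable on ℝ and (W_ψf)(b,a) = (√a / 2π) ∫_{−∞}^{∞} e^{ibω} f̂(ω) conj(ψ̂(aω)) dω. -/
open MeasureTheory

/-!
The wavelet transform `(W_ψ f)(b, a)` is the `L²` pairing of `f` with the rescaled wavelet
`ψ_{b,a}(t) = a^{−1/2} ψ((t − b)/a)`, whose Fourier transform is `√a e^{−ibω} ψ̂(aω)`. Parseval's
identity therefore turns it into the pairing of `f̂` with `√a e^{−ibω} ψ̂(aω)`, up to `1/(2π)`. The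
abstract Plancherel theorem concerns the isometric extension of `𝓕` to `L²`; it applies to the
Fourier integrals of `L¹ ∩ L²` functions because both transforms satisfy
`∫ 𝓕 φ • f = ∫ φ • 𝓕 f` for all Schwartz functions `φ`.
-/

open FourierTransform
open scoped ComplexConjugate ENNReal

section Plancherel

open scoped ContDiff SchwartzMap

variable {V F : Type*} [NormedAddCommGroup V] [MeasurableSpace V] [BorelSpace V]
  [NormedAddCommGroup F]

theorem ae_eq_of_integral_schwartzMap_smul_eq [NormedSpace ℝ V] [FiniteDimensional ℝ V]
    [NormedSpace ℂ F] [CompleteSpace F] {μ : Measure V} {f g : V → F}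
    (hf : LocallyIntegrable f μ) (hg : LocallyIntegrable g μ)
    (h : ∀ φ : 𝓢(V, ℂ), ∫ x, φ x • f x ∂μ = ∫ x, φ x • g x ∂μ) : f =ᵐ[μ] g := by
  refine ae_eq_of_integral_contDiff_smul_eq hf hg fun φ φ_smooth φ_supp => ?_
  have φ_supp' : HasCompactSupport (Complex.ofRealCLM ∘ φ) := φ_supp.comp_left rfl
  have φ_smooth' : ContDiff ℝ ∞ (Complex.ofRealCLM ∘ φ) := by fun_prop
  simpa using h (φ_supp'.toSchwartzMap φ_smooth')

variable [InnerProductSpace ℝ V] [FiniteDimensional ℝ V]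

theorem continuous_fourier_of_integrable [NormedSpace ℂ F] {f : V → F} (hf : Integrable f) :
    Continuous (𝓕 f) :=
  VectorFourier.fourierIntegral_continuous Real.continuous_fourierChar continuous_inner hf

theorem integral_fourier_smul_eq_integral_smul_fourier [NormedSpace ℂ F] [CompleteSpace F]
    {φ : V → ℂ} {f : V → F} (hφ : Integrable φ) (hf : Integrable f) :
    ∫ ξ, 𝓕 φ ξ • f ξ = ∫ x, φ x • 𝓕 f x := by
  simpa using! VectorFourier.integral_fourierIntegral_smul_eq_flip (L := innerₗ V)
    Real.continuous_fourierChar continuous_inner hφ hf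

variable [InnerProductSpace ℂ F] [CompleteSpace F] {f g : V → F}

theorem coeFn_fourier_toLp (hf₁ : Integrable f) (hf₂ : MemLp f 2) :
    (𝓕 (hf₂.toLp f) : Lp F 2 (volume : Measure V)) =ᵐ[volume] 𝓕 f := by
  refine ae_eq_of_integral_schwartzMap_smul_eq ((Lp.memLp _).locallyIntegrable one_le_two)
    (continuous_fourier_of_integrable hf₁).locallyIntegrable fun φ => ?_
  have fourier_distribution :=
    congrArg (fun T => T φ) (Lp.fourier_toTemperedDistribution_eq (hf₂.toLp f))
  simp only [TemperedDistribution.fourier_apply, Lp.toTemperedDistribution_apply]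
    at fourier_distribution
  calc ∫ x, φ x • (𝓕 (hf₂.toLp f) : Lp F 2 (volume : Measure V)) x
      = ∫ ξ, 𝓕 φ ξ • hf₂.toLp f ξ := fourier_distribution.symm
    _ = ∫ ξ, 𝓕 φ ξ • f ξ :=
      integral_congr_ae <| hf₂.coeFn_toLp.mono fun ξ hξ => congrArg (𝓕 φ ξ • ·) hξ
    _ = ∫ x, φ x • 𝓕 f x := integral_fourier_smul_eq_integral_smul_fourier φ.integrable hf₁

theorem memLp_two_fourier (hf₁ : Integrable f) (hf₂ : MemLp f 2) : MemLp (𝓕 f) 2 :=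
  (memLp_congr_ae (coeFn_fourier_toLp hf₁ hf₂)).1 (Lp.memLp _)

theorem integral_inner_fourier_fourier (hf₁ : Integrable f) (hf₂ : MemLp f 2)
    (hg₁ : Integrable g) (hg₂ : MemLp g 2) :
    ∫ ξ, inner ℂ (𝓕 f ξ) (𝓕 g ξ) = ∫ x, inner ℂ (f x) (g x) := by
  have fourier_side : inner ℂ (𝓕 (hf₂.toLp f)) (𝓕 (hg₂.toLp g)) =
      ∫ ξ, inner ℂ (𝓕 f ξ) (𝓕 g ξ) := by
    refine integral_congr_ae ?_
    filter_upwards [coeFn_fourier_toLp hf₁ hf₂, coeFn_fourier_toLp hg₁ hg₂] with ξ hfξ hgξ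
    rw [hfξ, hgξ]
  have space_side : inner ℂ (hf₂.toLp f) (hg₂.toLp g) = ∫ x, inner ℂ (f x) (g x) := by
    refine integral_congr_ae ?_
    filter_upwards [hf₂.coeFn_toLp, hg₂.coeFn_toLp] with x hfx hgx
    rw [hfx, hgx]
  rw [← fourier_side, ← space_side, Lp.inner_fourier_eq]

end Plancherel

theorem memLp_comp_smul {E F : Type*} [NormedAddCommGroup E] [NormedSpace ℝ E]
    [FiniteDimensional ℝ E] [MeasurableSpace E] [BorelSpace E] [NormedAddCommGroup F]
    {μ : Measure E} [μ.IsAddHaarMeasure] {p : ℝ≥0∞} {f : E → F} (hf : MemLp f p μ)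
    {r : ℝ} (hr : r ≠ 0) : MemLp (fun x => f (r • x)) p μ := by
  refine ((measurableEmbedding_const_smul₀ hr).memLp_map_measure_iff (g := f)).1 ?_
  rw [Measure.map_addHaar_smul μ hr]
  exact hf.smul_measure ENNReal.ofReal_ne_top

section FourierInt

variable {f g : ℝ → ℂ}

theorem fourierInt_eq_fourier (f : ℝ → ℂ) (ω : ℝ) :
    fourierInt f ω = 𝓕 f ((2 * Real.pi)⁻¹ * ω) := by
  rw [Real.fourier_real_eq_integral_exp_smul, fourierInt]
  refine integral_congr_ae (.of_forall fun t => ?_)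
  simp only [smul_eq_mul]
  congr 2
  push_cast
  field_simp [Complex.ofReal_ne_zero.2 Real.pi_ne_zero]

theorem memLp_two_fourierInt (hf₁ : Integrable f) (hf₂ : MemLp f 2) :
    MemLp (fourierInt f) 2 := by
  rw [funext (fourierInt_eq_fourier f)]
  exact memLp_comp_smul (memLp_two_fourier hf₁ hf₂) (by positivity)

theorem integrable_fourierInt_mul_conj (hf₁ : Integrable f) (hf₂ : MemLp f 2)
    (hg₁ : Integrable g) (hg₂ : MemLp g 2) :
    Integrable fun ω => fourierInt f ω * conj (fourierInt g ω) :=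
  (memLp_two_fourierInt hf₁ hf₂).integrable_mul (memLp_two_fourierInt hg₁ hg₂).star

theorem integral_fourierInt_mul_conj (hf₁ : Integrable f) (hf₂ : MemLp f 2)
    (hg₁ : Integrable g) (hg₂ : MemLp g 2) :
    ∫ ω, fourierInt f ω * conj (fourierInt g ω) =
      (2 * Real.pi : ℝ) * ∫ t, f t * conj (g t) := by
  simp only [fourierInt_eq_fourier]
  rw [Measure.integral_comp_mul_left (fun ξ => 𝓕 f ξ * conj (𝓕 g ξ)), inv_inv,
    abs_of_pos Real.two_pi_pos, Complex.real_smul]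
  exact congrArg _ (integral_inner_fourier_fourier hg₁ hg₂ hf₁ hf₂)

theorem fourierInt_const_mul (c : ℂ) (f : ℝ → ℂ) (ω : ℝ) :
    fourierInt (fun t => c * f t) ω = c * fourierInt f ω := by
  simp only [fourierInt, mul_left_comm _ c, integral_const_mul]

theorem fourierInt_comp_sub_right (f : ℝ → ℂ) (b ω : ℝ) :
    fourierInt (fun t => f (t - b)) ω = Complex.exp (-(Complex.I * b * ω)) * fourierInt f ω := by
  rw [fourierInt, fourierInt, ← integral_add_right_eq_self _ b, ← integral_const_mul]
  refine integral_congr_ae (.of_forall fun t => ?_)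
  simp only [add_sub_cancel_right, ← mul_assoc, ← Complex.exp_add]
  congr 2
  push_cast
  ring

theorem fourierInt_comp_div (f : ℝ → ℂ) {a : ℝ} (ha : a ≠ 0) (ω : ℝ) :
    fourierInt (fun t => f (t / a)) ω = |a| * fourierInt f (a * ω) := by
  rw [fourierInt, fourierInt, ← Complex.real_smul, ← Measure.integral_comp_div]
  refine integral_congr_ae (.of_forall fun t => ?_)
  have phase : (t : ℂ) * ω = (t / a : ℝ) * (a * ω : ℝ) := by
    norm_cast
    field_simp
  simp only [mul_assoc, phase]

end FourierInt

/-- The wavelet `ψ_{b,a}(t) = a^{−1/2} ψ((t − b)/a)` at position `b` and scale `a`, against which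
`waveletTransform ψ` integrates. -/
noncomputable def waveletAtom (ψ : ℝ → ℂ) (b a t : ℝ) : ℂ :=
  ((Real.sqrt a)⁻¹ : ℝ) * ψ ((t - b) / a)

section WaveletAtom

variable {ψ : ℝ → ℂ} {a : ℝ}

theorem waveletTransform_eq_integral_mul_conj_waveletAtom (ψ f : ℝ → ℂ) (b a : ℝ) :
    waveletTransform ψ f b a = ∫ t, f t * conj (waveletAtom ψ b a t) := by
  simp only [waveletTransform, waveletAtom, map_mul, Complex.conj_ofReal, mul_left_comm (f _),
    integral_const_mul]

theorem memLp_waveletAtom {p : ℝ≥0∞} (hψ : MemLp ψ p) (b : ℝ) (ha : a ≠ 0) :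
    MemLp (waveletAtom ψ b a) p := by
  have dilated : MemLp (fun t => ψ (t / a)) p := by
    simpa only [smul_eq_mul, inv_mul_eq_div] using memLp_comp_smul hψ (inv_ne_zero ha)
  exact (dilated.comp_measurePreserving (measurePreserving_sub_right volume b)).const_mul _

theorem fourierInt_waveletAtom (ψ : ℝ → ℂ) (b : ℝ) (ha : 0 < a) (ω : ℝ) :
    fourierInt (waveletAtom ψ b a) ω =
      Real.sqrt a * (Complex.exp (-(Complex.I * b * ω)) * fourierInt ψ (a * ω)) := by
  have scale : (((Real.sqrt a)⁻¹ : ℝ) : ℂ) * |a| = Real.sqrt a := by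
    rw [abs_of_pos ha, ← Complex.ofReal_mul, inv_mul_eq_div, Real.div_sqrt]
  calc fourierInt (waveletAtom ψ b a) ω
      = ((Real.sqrt a)⁻¹ : ℝ) *
          (Complex.exp (-(Complex.I * b * ω)) * (|a| * fourierInt ψ (a * ω))) := by
        rw [← fourierInt_comp_div ψ ha.ne', ← fourierInt_comp_sub_right (fun t => ψ (t / a)),
          ← fourierInt_const_mul]
        rfl
    _ = Real.sqrt a * (Complex.exp (-(Complex.I * b * ω)) * fourierInt ψ (a * ω)) := by
        rw [← scale]
        ring

theorem mul_conj_fourierInt_waveletAtom (ψ : ℝ → ℂ) (b : ℝ) (ha : 0 < a) (ω : ℝ) (z : ℂ) :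
    z * conj (fourierInt (waveletAtom ψ b a) ω) =
      Real.sqrt a * (Complex.exp (Complex.I * b * ω) * z * conj (fourierInt ψ (a * ω))) := by
  have conj_phase :
      conj (Complex.exp (-(Complex.I * b * ω))) = Complex.exp (Complex.I * b * ω) := by
    simp [← Complex.exp_conj]
  rw [fourierInt_waveletAtom ψ b ha, map_mul, map_mul, Complex.conj_ofReal, conj_phase]
  ring

end WaveletAtom

/-- **Fourier representation of the wavelet transform.**
For `f, ψ ∈ L¹(ℝ) ∩ L²(ℝ)`, `b ∈ ℝ` and `a > 0`, the function
`ω ↦ e^{ibω} f̂(ω) conj(ψ̂(aω))` is integrable and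
`(W_ψ f)(b,a) = (√a / 2π) ∫ e^{ibω} f̂(ω) conj(ψ̂(aω)) dω`. -/
theorem waveletTransform_fourier_rep (f ψ : ℝ → ℂ)
    (hf1 : Integrable f) (hf2 : MemLp f 2 volume)
    (hψ1 : Integrable ψ) (hψ2 : MemLp ψ 2 volume)
    (b a : ℝ) (ha : 0 < a) :
    Integrable (fun ω : ℝ => Complex.exp (Complex.I * b * ω) * fourierInt f ω *
        (starRingEnd ℂ) (fourierInt ψ (a * ω)))
    ∧ waveletTransform ψ f b a
        = ((Real.sqrt a / (2 * Real.pi) : ℝ) : ℂ) *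
            ∫ ω : ℝ, Complex.exp (Complex.I * b * ω) * fourierInt f ω *
              (starRingEnd ℂ) (fourierInt ψ (a * ω)) := by
  have hψab₁ : Integrable (waveletAtom ψ b a) :=
    memLp_one_iff_integrable.1 (memLp_waveletAtom (memLp_one_iff_integrable.2 hψ1) b ha.ne')
  have hψab₂ : MemLp (waveletAtom ψ b a) 2 := memLp_waveletAtom hψ2 b ha.ne'
  have integrable_spectrum := integrable_fourierInt_mul_conj hf1 hf2 hψab₁ hψab₂
  have parseval := integral_fourierInt_mul_conj hf1 hf2 hψab₁ hψab₂
  simp only [mul_conj_fourierInt_waveletAtom ψ b ha] at integrable_spectrum parseval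
  have sqrt_ne_zero : (Real.sqrt a : ℂ) ≠ 0 := Complex.ofReal_ne_zero.2 (Real.sqrt_pos.2 ha).ne'
  refine ⟨(integrable_const_mul_iff sqrt_ne_zero.isUnit _).1 integrable_spectrum, ?_⟩
  rw [integral_const_mul, ← waveletTransform_eq_integral_mul_conj_waveletAtom] at parseval
  rw [Complex.ofReal_div, div_mul_eq_mul_div, parseval,
    mul_div_cancel_left₀ _ (Complex.ofReal_ne_zero.2 Real.two_pi_pos.ne')]
end

section
/- Let b∈ℝ, b≠0, let β>0, and let z∈ℂ with Re z < β+1. Let h:(0,∞)→ℂ be continuous with h(u)=O(u^ρ) as u→0+ for some ρ with ρ + Re z > 0, and suppose that for u≥1 one can write h(u)=e^{ibu} φ(u) where φ is continuously differentiable on [1,∞) with φ(u)=O(u^{−β}) and φ′(u)=O(u^{−β−1}) as u→+∞. Then the generalized Mellin transform of h at z exists; that is, the limit lim_{ε→0+} ∫_0^∞ u^{z−1} h(u) e^{−εu} du exists in ℂ. -/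
open MeasureTheory Filter Set Topology Asymptotics

/-! Cut the integral at a large `a`. On `(0, a]` the function `u ^ (z - 1) • h u` is integrable, so
the factor `exp (-ε * u)` may be removed by dominated convergence. On `(a, ∞)` it equals
`exp (c * u) • g u` with `g u = u ^ (z - 1) • φ u`, and one integration by parts against
`exp ((c - ε) * u)` moves the derivative onto `g`. Since `g'` is `O(u ^ (re z - β - 2))`, it is
integrable, and dominated convergence applies to the new integral. The primitive contributes the
factor `(c - ε)⁻¹`, which stays bounded because `c ≠ 0`. -/

variable {E : Type*} [NormedAddCommGroup E]

lemma integrableOn_Ioc_of_integrableAtFilter {f : ℝ → E} {x a : ℝ} {μ : Measure ℝ}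
    (hf : IntegrableAtFilter f (𝓝[>] x) μ) (hloc : LocallyIntegrableOn f (Ioi x) μ) :
    IntegrableOn f (Ioc x a) μ := by
  obtain ⟨s, hs, hfs⟩ := hf
  obtain ⟨b, hb, hbs⟩ := mem_nhdsGT_iff_exists_Ioo_subset.1 hs
  have hcompact : IntegrableOn f (Icc b a) μ :=
    hloc.integrableOn_compact_subset (fun u hu ↦ lt_of_lt_of_le hb hu.1) isCompact_Icc
  refine ((hfs.mono_set hbs).union hcompact).mono_set fun u hu ↦ ?_
  exact (lt_or_ge u b).imp (⟨hu.1, ·⟩) (⟨·, hu.2⟩)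

section AbelIntegrableOn

variable [NormedSpace ℝ E] {f g : ℝ → E} {s t : Set ℝ} {μ : Measure ℝ}

/-- Integrability in the sense of Abel summation: every regularized integral
`∫ u in s, exp (-ε * u) • f u` with `ε > 0` converges absolutely, and these integrals have a limit
as `ε → 0+`. For `f u = u ^ (z - 1) • h u` and `s = (0, ∞)`, the limit is the generalized Mellin
transform of `h` at `z`. -/
def AbelIntegrableOn (f : ℝ → E) (s : Set ℝ) (μ : Measure ℝ := by volume_tac) : Prop :=
  (∀ ε : ℝ, 0 < ε → IntegrableOn (fun u ↦ Real.exp (-ε * u) • f u) s μ) ∧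
    ∃ L : E, Tendsto (fun ε : ℝ ↦ ∫ u in s, Real.exp (-ε * u) • f u ∂μ) (𝓝[>] 0) (𝓝 L)

namespace AbelIntegrableOn

lemma congr_fun (hf : AbelIntegrableOn f s μ) (hfg : EqOn f g s) (hs : MeasurableSet s) :
    AbelIntegrableOn g s μ := by
  have hreg (ε : ℝ) :
      EqOn (fun u ↦ Real.exp (-ε * u) • f u) (fun u ↦ Real.exp (-ε * u) • g u) s :=
    fun u hu ↦ congrArg (Real.exp (-ε * u) • ·) (hfg hu)
  obtain ⟨hint, L, hL⟩ := hf
  exact ⟨fun ε hε ↦ (hint ε hε).congr_fun (hreg ε) hs, L,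
    hL.congr fun ε ↦ setIntegral_congr_fun hs (hreg ε)⟩

lemma union (hs : AbelIntegrableOn f s μ) (ht : AbelIntegrableOn f t μ) (hst : Disjoint s t)
    (htm : MeasurableSet t) : AbelIntegrableOn f (s ∪ t) μ := by
  obtain ⟨hints, L, hL⟩ := hs
  obtain ⟨hintt, M, hM⟩ := ht
  refine ⟨fun ε hε ↦ (hints ε hε).union (hintt ε hε), L + M, (hL.add hM).congr' ?_⟩
  filter_upwards [self_mem_nhdsWithin] with ε hε
  exact (setIntegral_union hst htm (hints ε hε) (hintt ε hε)).symm

lemma of_integrableOn (hf : IntegrableOn f s μ) (hs : MeasurableSet s) (hs0 : s ⊆ Ici 0) :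
    AbelIntegrableOn f s μ := by
  have hmeas (ε : ℝ) :
      AEStronglyMeasurable (fun u ↦ Real.exp (-ε * u) • f u) (μ.restrict s) :=
    (by fun_prop : Continuous fun u ↦ Real.exp (-ε * u)).aestronglyMeasurable.smul
      hf.aestronglyMeasurable
  have hbound (ε : ℝ) (hε : 0 < ε) : ∀ᵐ u ∂μ.restrict s, ‖Real.exp (-ε * u) • f u‖ ≤ ‖f u‖ := by
    filter_upwards [ae_restrict_mem hs] with u hu
    rw [norm_smul, Real.norm_eq_abs, Real.abs_exp]
    refine mul_le_of_le_one_left (norm_nonneg _) (Real.exp_le_one_iff.2 ?_)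
    exact mul_nonpos_of_nonpos_of_nonneg (neg_nonpos.2 hε.le) (hs0 hu)
  have hpointwise (u : ℝ) : Tendsto (fun ε ↦ Real.exp (-ε * u) • f u) (𝓝[>] 0) (𝓝 (f u)) := by
    have hcont : Continuous fun ε ↦ Real.exp (-ε * u) • f u := by fun_prop
    simpa using (hcont.tendsto 0).mono_left nhdsWithin_le_nhds
  refine ⟨fun ε hε ↦ hf.norm.mono' (hmeas ε) (hbound ε hε), ∫ u in s, f u ∂μ, ?_⟩
  refine tendsto_integral_filter_of_dominated_convergence (fun u ↦ ‖f u‖)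
    (.of_forall hmeas) ?_ hf.norm (ae_of_all _ hpointwise)
  filter_upwards [self_mem_nhdsWithin] with ε hε using hbound ε hε

end AbelIntegrableOn

end AbelIntegrableOn

section Exponential

variable [NormedSpace ℂ E] {c w : ℂ} {a : ℝ} {f g g' : ℝ → E}

lemma norm_cexp_mul_ofReal (w : ℂ) (u : ℝ) : ‖Complex.exp (w * u)‖ = Real.exp (w.re * u) := by
  rw [Complex.norm_exp, Complex.re_mul_ofReal]

lemma exp_neg_smul_cexp_smul (ε : ℝ) (c : ℂ) (u : ℝ) (v : E) :
    Real.exp (-ε * u) • Complex.exp (c * u) • v = Complex.exp ((c - ε) * u) • v := by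
  rw [← Complex.coe_smul, smul_smul, Complex.ofReal_exp, ← Complex.exp_add]
  push_cast
  ring_nf

lemma integrableOn_cexp_smul (hw : w.re ≤ 0) (hf : IntegrableOn f (Ioi a)) :
    IntegrableOn (fun u : ℝ ↦ Complex.exp (w * u) • f u) (Ioi a) := by
  have hcont : Continuous fun u : ℝ ↦ Complex.exp (w * u) := by fun_prop
  refine hf.bdd_smul (Real.exp (w.re * a)) hcont.aestronglyMeasurable ?_
  filter_upwards [ae_restrict_mem measurableSet_Ioi] with u hu
  rw [norm_cexp_mul_ofReal, Real.exp_le_exp]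
  exact mul_le_mul_of_nonpos_left hu.le hw

lemma integrableOn_cexp_smul_of_isBigO_one (hw : w.re < 0) (hg : ContinuousOn g (Ici a))
    (hgO : g =O[atTop] fun _ ↦ (1 : ℂ)) :
    IntegrableOn (fun u : ℝ ↦ Complex.exp (w * u) • g u) (Ioi a) := by
  have hcont : ContinuousOn (fun u : ℝ ↦ Complex.exp (w * u) • g u) (Ici a) :=
    (by fun_prop : Continuous fun u : ℝ ↦ Complex.exp (w * u)).continuousOn.smul hg
  have hexp : IntegrableAtFilter (fun u : ℝ ↦ Complex.exp (w * u) • (1 : ℂ)) atTop :=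
    ⟨Ioi a, Ioi_mem_atTop a, (integrableOn_exp_mul_complex_Ioi hw a).smul_const 1⟩
  exact ((hcont.locallyIntegrableOn measurableSet_Ici).integrableOn_of_isBigO_atTop
    ((isBigO_refl _ _).smul hgO) hexp).mono_set Ioi_subset_Ici_self

lemma tendsto_cexp_mul_ofReal_atTop (hw : w.re < 0) :
    Tendsto (fun u : ℝ ↦ Complex.exp (w * u)) atTop (𝓝 0) := by
  rw [tendsto_zero_iff_norm_tendsto_zero]
  simp only [norm_cexp_mul_ofReal]
  exact Real.tendsto_exp_atBot.comp (tendsto_id.const_mul_atTop_of_neg hw)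

lemma hasDerivAt_cexp_mul_ofReal (w : ℂ) (x : ℝ) :
    HasDerivAt (fun u : ℝ ↦ Complex.exp (w * u)) (w * Complex.exp (w * x)) x := by
  simpa [mul_comm] using ((hasDerivAt_id (x : ℂ)).const_mul w).cexp.comp_ofReal

variable [CompleteSpace E]

lemma integrableOn_cexp_smul_of_hasDerivAt (hw : w.re < 0)
    (hg : ∀ x ∈ Ici a, HasDerivAt g (g' x) x) (hg' : IntegrableOn g' (Ioi a)) :
    IntegrableOn (fun u : ℝ ↦ Complex.exp (w * u) • g u) (Ioi a) :=
  integrableOn_cexp_smul_of_isBigO_one hw (HasDerivAt.continuousOn hg)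
    ((tendsto_limUnder_of_hasDerivAt_of_integrableOn_Ioi
      (fun x hx ↦ hg x (Ioi_subset_Ici_self hx)) hg').isBigO_one ℂ)

lemma integral_Ioi_cexp_smul (hw : w.re < 0) (hg : ∀ x ∈ Ici a, HasDerivAt g (g' x) x)
    (hg' : IntegrableOn g' (Ioi a)) :
    ∫ u in Ioi a, Complex.exp (w * u) • g u =
      -w⁻¹ • (Complex.exp (w * a) • g a + ∫ u in Ioi a, Complex.exp (w * u) • g' u) := by
  have hlim := tendsto_limUnder_of_hasDerivAt_of_integrableOn_Ioi
    (fun x hx ↦ hg x (Ioi_subset_Ici_self hx)) hg'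
  have hint := integrableOn_cexp_smul_of_hasDerivAt hw hg hg'
  have hint' := integrableOn_cexp_smul hw.le hg'
  have hderiv (x : ℝ) (hx : x ∈ Ici a) : HasDerivAt (fun u : ℝ ↦ Complex.exp (w * u) • g u)
      (Complex.exp (w * x) • g' x + w • Complex.exp (w * x) • g x) x := by
    rw [smul_smul]
    exact (hasDerivAt_cexp_mul_ofReal w x).fun_smul (hg x hx)
  have hzero : Tendsto (fun u : ℝ ↦ Complex.exp (w * u) • g u) atTop (𝓝 0) := by
    simpa using (tendsto_cexp_mul_ofReal_atTop hw).smul hlim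
  have hftc := integral_Ioi_of_hasDerivAt_of_tendsto' hderiv (hint'.add (hint.smul w)) hzero
  rw [integral_add hint' (by exact hint.smul w), integral_smul] at hftc
  rw [neg_smul, ← smul_neg, eq_inv_smul_iff₀ (fun h ↦ by simp [h] at hw)]
  linear_combination (norm := module) hftc

lemma AbelIntegrableOn.cexp_smul (hc : c ≠ 0) (hc_re : c.re ≤ 0) (ha : 0 ≤ a)
    (hg : ∀ x ∈ Ici a, HasDerivAt g (g' x) x) (hg' : IntegrableOn g' (Ioi a)) :
    AbelIntegrableOn (fun u : ℝ ↦ Complex.exp (c * u) • g u) (Ioi a) := by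
  have hre (ε : ℝ) (hε : 0 < ε) : (c - ε).re < 0 := by
    simpa using hc_re.trans_lt hε
  obtain ⟨-, L, hL⟩ := AbelIntegrableOn.of_integrableOn (integrableOn_cexp_smul hc_re hg')
    measurableSet_Ioi (Ioi_subset_Ici ha)
  simp only [AbelIntegrableOn, exp_neg_smul_cexp_smul] at hL ⊢
  have hcoeff : Tendsto (fun ε : ℝ ↦ -(c - ε)⁻¹) (𝓝[>] 0) (𝓝 (-c⁻¹)) := by
    have : ContinuousAt (fun ε : ℝ ↦ -(c - ε)⁻¹) 0 := by
      fun_prop (disch := simpa)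
    simpa using this.tendsto.mono_left nhdsWithin_le_nhds
  have hbdry : Tendsto (fun ε : ℝ ↦ Complex.exp ((c - ε) * a) • g a) (𝓝[>] 0)
      (𝓝 (Complex.exp (c * a) • g a)) := by
    have : Continuous fun ε : ℝ ↦ Complex.exp ((c - ε) * a) • g a := by fun_prop
    simpa using (this.tendsto 0).mono_left nhdsWithin_le_nhds
  refine ⟨fun ε hε ↦ integrableOn_cexp_smul_of_hasDerivAt (hre ε hε) hg hg',
    _, (hcoeff.smul (hbdry.add hL)).congr' ?_⟩
  filter_upwards [self_mem_nhdsWithin] with ε hε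
  exact (integral_Ioi_cexp_smul (hre ε hε) hg hg').symm

end Exponential

section Power

variable [NormedSpace ℂ E] {w : ℂ} {φ : ℝ → E}

lemma differentiableAt_ofReal_cpow_const_of_pos {x : ℝ} (hx : 0 < x) (w : ℂ) :
    DifferentiableAt ℝ (fun u : ℝ ↦ (u : ℂ) ^ w) x :=
  (Complex.hasStrictDerivAt_cpow_const
    (Complex.ofReal_mem_slitPlane.2 hx)).hasDerivAt.comp_ofReal.differentiableAt

lemma integrableOn_Ioc_cpow_smul {h : ℝ → E} {ρ : ℝ} (hloc : LocallyIntegrableOn h (Ioi 0))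
    (hO : h =O[𝓝[>] 0] fun u ↦ u ^ ρ) (hρ : -1 < w.re + ρ) (a : ℝ) :
    IntegrableOn (fun u : ℝ ↦ (u : ℂ) ^ w • h u) (Ioc 0 a) := by
  have hcont : ContinuousOn (fun u : ℝ ↦ (u : ℂ) ^ w) (Ioi 0) := fun x hx ↦
    (differentiableAt_ofReal_cpow_const_of_pos hx w).continuousAt.continuousWithinAt
  have hloc' := hloc.continuousOn_smul isOpen_Ioi.isLocallyClosed hcont
  have hpow : IntegrableAtFilter (fun u : ℝ ↦ u ^ (w.re + ρ)) (𝓝[>] 0) :=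
    ⟨Ioo 0 1, Ioo_mem_nhdsGT one_pos,
      (intervalIntegral.integrableOn_Ioo_rpow_iff one_pos).2 hρ⟩
  have hO' : (fun u : ℝ ↦ (u : ℂ) ^ w • h u) =O[𝓝[>] 0] fun u ↦ u ^ (w.re + ρ) := by
    have hw : (fun u : ℝ ↦ (u : ℂ) ^ w) =O[𝓝[>] 0] fun u ↦ u ^ w.re := by
      refine .of_norm_eventuallyLE ?_
      filter_upwards [self_mem_nhdsWithin] with u hu
      exact (Complex.norm_cpow_eq_rpow_re_of_pos hu w).le
    refine (hw.smul hO).congr' .rfl ?_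
    filter_upwards [self_mem_nhdsWithin] with u hu
    exact (Real.rpow_add hu _ _).symm
  exact integrableOn_Ioc_of_integrableAtFilter
    (hO'.integrableAtFilter ⟨Ioi 0, self_mem_nhdsWithin, hloc'.aestronglyMeasurable⟩ hpow) hloc'

lemma isBigO_deriv_cpow_smul {β : ℝ} (hφ : ∀ᶠ u in atTop, DifferentiableAt ℝ φ u)
    (hφO : φ =O[atTop] fun u ↦ u ^ (-β)) (hφ'O : deriv φ =O[atTop] fun u ↦ u ^ (-β - 1)) :
    deriv (fun u : ℝ ↦ (u : ℂ) ^ w • φ u) =O[atTop] fun u ↦ u ^ (w.re - β - 1) := by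
  have hpow : (fun u : ℝ ↦ (u : ℂ) ^ w) =O[atTop] fun u ↦ u ^ w.re :=
    .of_norm_eventuallyLE (Complex.norm_ofReal_cpow_eventually_eq_atTop w).le
  have hterm₁ : (fun u : ℝ ↦ (u : ℂ) ^ w • deriv φ u) =O[atTop] fun u ↦ u ^ (w.re - β - 1) := by
    refine (hpow.smul hφ'O).congr' .rfl ?_
    filter_upwards [eventually_gt_atTop 0] with u hu
    rw [smul_eq_mul, ← Real.rpow_add hu]
    ring_nf
  have hterm₂ : (fun u : ℝ ↦ deriv (fun x : ℝ ↦ (x : ℂ) ^ w) u • φ u) =O[atTop]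
      fun u ↦ u ^ (w.re - β - 1) := by
    refine ((isBigO_deriv_ofReal_cpow_const_atTop w).smul hφO).congr' .rfl ?_
    filter_upwards [eventually_gt_atTop 0] with u hu
    rw [smul_eq_mul, ← Real.rpow_add hu]
    ring_nf
  refine (hterm₁.add hterm₂).congr' ?_ .rfl
  filter_upwards [eventually_gt_atTop 0, hφ] with u hu hφu
  exact (deriv_fun_smul (differentiableAt_ofReal_cpow_const_of_pos hu w) hφu).symm

lemma eventually_abelIntegrableOn_cexp_smul_cpow_smul [CompleteSpace E] {c : ℂ} {β : ℝ}
    (hc : c ≠ 0) (hc_re : c.re ≤ 0) (hw : w.re < β) (hφ : ∀ᶠ u in atTop, DifferentiableAt ℝ φ u)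
    (hφO : φ =O[atTop] fun u ↦ u ^ (-β)) (hφ'O : deriv φ =O[atTop] fun u ↦ u ^ (-β - 1)) :
    ∀ᶠ a in atTop,
      AbelIntegrableOn (fun u : ℝ ↦ Complex.exp (c * u) • (u : ℂ) ^ w • φ u) (Ioi a) := by
  have hint : IntegrableAtFilter (deriv fun u : ℝ ↦ (u : ℂ) ^ w • φ u) atTop :=
    (isBigO_deriv_cpow_smul hφ hφO hφ'O).integrableAtFilter
      (stronglyMeasurable_deriv _).stronglyMeasurableAtFilter
      (integrableAtFilter_rpow_atTop_iff.2 (by linarith))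
  obtain ⟨b, hb⟩ := integrableAtFilter_atTop_iff.1 hint
  filter_upwards [eventually_gt_atTop 0, eventually_ge_atTop b,
      eventually_forall_ge_atTop.2 hφ] with a ha hba hφa
  refine .cexp_smul hc hc_re ha.le (fun x hx ↦ ?_)
    (hb.mono_set ((Ioi_subset_Ioi hba).trans Ioi_subset_Ici_self))
  exact ((differentiableAt_ofReal_cpow_const_of_pos (ha.trans_le hx) w).fun_smul
    (hφa x hx)).hasDerivAt

end Power

theorem generalized_mellin_exists_general [NormedSpace ℂ E] [CompleteSpace E] {c z : ℂ} {β ρ : ℝ}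
    {h φ : ℝ → E} (hc : c ≠ 0) (hc_re : c.re ≤ 0) (hz : z.re < β + 1) (hρ : 0 < ρ + z.re)
    (hloc : LocallyIntegrableOn h (Ioi 0)) (hh0 : h =O[𝓝[>] 0] fun u ↦ u ^ ρ)
    (hhφ : ∀ᶠ u : ℝ in atTop, h u = Complex.exp (c * u) • φ u)
    (hφ : ∀ᶠ u in atTop, DifferentiableAt ℝ φ u) (hφO : φ =O[atTop] fun u ↦ u ^ (-β))
    (hφ'O : deriv φ =O[atTop] fun u ↦ u ^ (-β - 1)) :
    AbelIntegrableOn (fun u : ℝ ↦ (u : ℂ) ^ (z - 1) • h u) (Ioi 0) := by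
  have hre : (z - 1).re = z.re - 1 := by simp
  obtain ⟨a, htail, hhφa, ha⟩ := ((eventually_abelIntegrableOn_cexp_smul_cpow_smul (w := z - 1)
    hc hc_re (by linarith) hφ hφO hφ'O).and
      ((eventually_forall_ge_atTop.2 hhφ).and (eventually_ge_atTop 0))).exists
  have hhead : AbelIntegrableOn (fun u : ℝ ↦ (u : ℂ) ^ (z - 1) • h u) (Ioc 0 a) :=
    .of_integrableOn (integrableOn_Ioc_cpow_smul hloc hh0 (by linarith) a) measurableSet_Ioc
      (Ioc_subset_Ioi_self.trans Ioi_subset_Ici_self)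
  rw [← Ioc_union_Ioi_eq_Ioi ha]
  refine hhead.union (htail.congr_fun (fun u hu ↦ ?_) measurableSet_Ioi)
    (Ioc_disjoint_Ioi le_rfl) measurableSet_Ioi
  simp only [hhφa u hu.le, smul_comm (Complex.exp (c * u))]

/-- **Existence of the generalized Mellin transform.**
Let `b ≠ 0`, `β > 0`, `z ∈ ℂ` with `Re z < β + 1`.  Let `h : (0,∞) → ℂ` be continuous
with `h(u) = O(u^ρ)` as `u → 0+` where `ρ + Re z > 0`, and suppose that for `u ≥ 1` one
can write `h(u) = e^{ibu} φ(u)` with `φ` continuously differentiable on `[1,∞)`,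
`φ(u) = O(u^{−β})` and `φ′(u) = O(u^{−β−1})` as `u → +∞`.  Then the generalized Mellin
transform `M[h; z] = lim_{ε→0+} ∫_0^∞ u^{z−1} h(u) e^{−εu} du` exists. -/
theorem generalized_mellin_exists (b : ℝ) (hb : b ≠ 0) (β : ℝ) (hβ : 0 < β)
    (z : ℂ) (hz : z.re < β + 1)
    (h : ℝ → ℂ) (hcont : ContinuousOn h (Ioi 0))
    (ρ : ℝ) (hρ : ρ + z.re > 0)
    (hh0 : h =O[𝓝[>] (0 : ℝ)] fun u => u ^ ρ)
    (φ : ℝ → ℂ) (hφ : ContDiffOn ℝ 1 φ (Ici 1))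
    (hhφ : ∀ u : ℝ, 1 ≤ u → h u = Complex.exp (Complex.I * b * u) * φ u)
    (hφO : φ =O[atTop] fun u : ℝ => u ^ (-β))
    (hφ'O : deriv φ =O[atTop] fun u : ℝ => u ^ (-β - 1)) :
    ∃ L : ℂ, Tendsto (fun ε : ℝ => ∫ u in Ioi (0 : ℝ),
        (u : ℂ) ^ (z - 1) * h u * ((Real.exp (-ε * u) : ℝ) : ℂ))
      (𝓝[>] 0) (𝓝 L) := by
  have hre : (Complex.I * b).re ≤ 0 := by simp
  have hφd : ∀ᶠ u in atTop, DifferentiableAt ℝ φ u := by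
    filter_upwards [eventually_gt_atTop 1] with u hu
    exact (hφ.differentiableOn one_ne_zero).differentiableAt (Ici_mem_nhds hu)
  obtain ⟨-, L, hL⟩ := generalized_mellin_exists_general
    (mul_ne_zero Complex.I_ne_zero (Complex.ofReal_ne_zero.2 hb)) hre hz hρ
    (hcont.locallyIntegrableOn measurableSet_Ioi) hh0
    ((eventually_ge_atTop 1).mono hhφ) hφd hφO hφ'O
  exact ⟨L, by simpa only [Complex.real_smul, smul_eq_mul, mul_comm] using hL⟩
end
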